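/- arXiv:2408.09165 — 2 statements merged into one kernel-verified Lean document; each statement's English description precedes it below -/
import Mathlib

section
/- Let d ≥ 1 and let α = (α_1,…,α_d) be a multi-index with α_j > −1/2 for each j. There exists a constant C > 0, depending only on α and d, such that for every t > 0 and every x ∈ (0,∞)^d, the integral of |∂p_t^α(x,y)/∂t| over the region F_t(x) = { y ∈ (0,∞)^d : √(e^{−t} x_j y_j) > 1 − e^{−t} for all j = 1,…,d } satisfies ∫_{F_t(x)} |∂p_t^α(x,y)/∂t| dy ≤ C/t. -/
open MeasureTheory Real Set

noncomputable def besselI (ν z : ℝ) : ℝ :=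
  ∑' m : ℕ, (z / 2) ^ (2 * (m : ℝ) + ν) / (Nat.factorial m * Real.Gamma ((m : ℝ) + ν + 1))

/-- The positive orthant `(0,∞)^d`. -/
def posOrthant (d : ℕ) : Set (Fin d → ℝ) := Set.univ.pi fun _ => Set.Ioi 0

/-- The Poisson–Laguerre kernel `p_t^α(x,y)`. -/
noncomputable def plKernel (d : ℕ) (α : Fin d → ℝ) (t : ℝ) (x y : Fin d → ℝ) : ℝ :=
  (1 / (2 * Real.sqrt π)) *
    ∫ r in Set.Ioo (0 : ℝ) 1,
      (t * Real.exp (t ^ 2 / (4 * Real.log r)) /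
          ((1 - r) ^ d * (-Real.log r) ^ ((3 : ℝ) / 2))) *
        (∏ j, (y j / x j) ^ (α j / 2) *
            Real.exp (-((r * x j + y j) / (1 - r)) - α j * Real.log r / 2) *
            besselI (α j) (2 * Real.sqrt (r * x j * y j) / (1 - r))) / r

/-- The Poisson–Laguerre semigroup `P_t^α f`, with the convention `P_0^α f = f`. -/
noncomputable def plP (d : ℕ) (α : Fin d → ℝ) (t : ℝ)
    (f : (Fin d → ℝ) → ℝ) (x : Fin d → ℝ) : ℝ :=
  if t = 0 then f x else ∫ y in posOrthant d, plKernel d α t x y * f y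

lemma measurable_besselI (ν : ℝ) : Measurable (besselI ν) := by
  unfold besselI
  fun_prop

/-- The one-dimensional Laguerre heat kernel `W_s^a(x,y)` in the variable `r = e^{-s}`. -/
noncomputable def laguerreHeat (a x r y : ℝ) : ℝ :=
  (1 - r)⁻¹ * ((y / x) ^ (a / 2) * Real.exp (-((r * x + y) / (1 - r)) - a * Real.log r / 2) *
    besselI a (2 * Real.sqrt (r * x * y) / (1 - r)))

/-- The Laguerre heat kernel is a Poisson mixture of gamma densities. -/
lemma laguerreHeat_eq_tsum {a x r y : ℝ} (hx : 0 < x) (hr : r ∈ Ioo (0 : ℝ) 1)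
    (hy : 0 < y) :
    laguerreHeat a x r y = ∑' m : ℕ, Real.exp (-(r * x / (1 - r))) *
      ((r * x / (1 - r)) ^ m / Nat.factorial m) *
        ProbabilityTheory.gammaPDFReal (m + a + 1) (1 / (1 - r)) y := by
  obtain ⟨hr0, hr1⟩ := hr
  have hq : 0 < 1 - r := by linarith
  rw [laguerreHeat, besselI, ← tsum_mul_left, ← tsum_mul_left]
  refine tsum_congr fun m => ?_
  rw [ProbabilityTheory.gammaPDFReal, if_pos hy.le]
  have e1 : Real.exp (-((r * x + y) / (1 - r)) - a * Real.log r / 2)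
      = Real.exp (-(r * x / (1 - r))) * Real.exp (-(1 / (1 - r) * y)) * r ^ (-(a / 2)) := by
    rw [Real.rpow_def_of_pos hr0, ← Real.exp_add, ← Real.exp_add]
    congr 1
    field_simp
    ring
  have e2 : 2 * Real.sqrt (r * x * y) / (1 - r) / 2 = (r * x * y) ^ (1 / 2 : ℝ) / (1 - r) := by
    rw [Real.sqrt_eq_rpow]; ring
  have e3 : (1 - r)⁻¹ * (y / x) ^ (a / 2) * r ^ (-(a / 2)) *
      ((r * x * y) ^ (1 / 2 : ℝ) / (1 - r)) ^ (2 * (m : ℝ) + a)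
      = (r * x / (1 - r)) ^ m * ((1 / (1 - r)) ^ ((m : ℝ) + a + 1) * y ^ ((m : ℝ) + a + 1 - 1)) := by
    rw [← Real.rpow_natCast]
    apply Real.log_injOn_pos (by simp only [mem_Ioi]; positivity)
      (by simp only [mem_Ioi]; positivity)
    rw [Real.log_mul (by positivity) (by positivity), Real.log_mul (by positivity) (by positivity),
      Real.log_mul (by positivity) (by positivity), Real.log_mul (by positivity) (by positivity),
      Real.log_mul (by positivity) (by positivity)]
    simp only [Real.log_inv]
    rw [Real.log_rpow (by positivity), Real.log_rpow (by positivity), Real.log_rpow (by positivity),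
      Real.log_rpow (by positivity), Real.log_rpow (by positivity), Real.log_rpow (by positivity),
      Real.log_div (by positivity) (by positivity), Real.log_div (by positivity) (by positivity),
      Real.log_div (by positivity) (by positivity), Real.log_div (by positivity) (by positivity),
      Real.log_rpow (by positivity),
      Real.log_mul (by positivity) (by positivity), Real.log_mul (by positivity) (by positivity),
      Real.log_one]
    ring
  rw [e1, e2]
  linear_combination (Real.exp (-(r * x / (1 - r))) * Real.exp (-(1 / (1 - r) * y)) /
    (Nat.factorial m * Real.Gamma ((m : ℝ) + a + 1))) * e3

lemma laguerreHeat_nonneg {a x r y : ℝ} (ha : -1 < a) (hx : 0 < x) (hr : r ∈ Ioo (0 : ℝ) 1)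
    (hy : 0 < y) : 0 ≤ laguerreHeat a x r y := by
  rw [laguerreHeat_eq_tsum hx hr hy]
  have hq : 0 < 1 - r := by linarith [hr.2]
  have hr0 := hr.1
  refine tsum_nonneg fun m => mul_nonneg (by positivity)
    (ProbabilityTheory.gammaPDFReal_nonneg ?_ (by positivity) _)
  have := m.cast_nonneg (α := ℝ)
  linarith

lemma lintegral_laguerreHeat_le_one {a x r : ℝ} (ha : -1 < a) (hx : 0 < x)
    (hr : r ∈ Ioo (0 : ℝ) 1) :
    ∫⁻ y in Ioi 0, ENNReal.ofReal (laguerreHeat a x r y) ≤ 1 := by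
  have hq : 0 < 1 - r := by linarith [hr.2]
  have hr0 := hr.1
  have hm (m : ℕ) : 0 < (m : ℝ) + a + 1 := by
    have := m.cast_nonneg (α := ℝ)
    linarith
  set c := r * x / (1 - r) with hc
  have hc0 : 0 < c := by positivity
  have hsum : HasSum (fun m : ℕ => Real.exp (-c) * (c ^ m / Nat.factorial m)) 1 := by
    have h := (NormedSpace.expSeries_div_hasSum_exp c).mul_left (Real.exp (-c))
    rwa [← Real.exp_eq_exp_ℝ, ← Real.exp_add, neg_add_cancel, Real.exp_zero] at h
  calc ∫⁻ y in Ioi 0, ENNReal.ofReal (laguerreHeat a x r y)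
      ≤ ∫⁻ y in Ioi 0, ∑' m : ℕ, ENNReal.ofReal (Real.exp (-c) * (c ^ m / Nat.factorial m)) *
          ProbabilityTheory.gammaPDF (m + a + 1) (1 / (1 - r)) y := by
        refine setLIntegral_mono' measurableSet_Ioi fun y hy => ?_
        rw [laguerreHeat_eq_tsum hx hr hy]
        have hp (m : ℕ) : ENNReal.ofReal (Real.exp (-c) * (c ^ m / Nat.factorial m)) *
            ProbabilityTheory.gammaPDF (m + a + 1) (1 / (1 - r)) y = ENNReal.ofReal
            (Real.exp (-c) * (c ^ m / Nat.factorial m) *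
              ProbabilityTheory.gammaPDFReal (m + a + 1) (1 / (1 - r)) y) := by
          rw [ProbabilityTheory.gammaPDF, ← ENNReal.ofReal_mul (by positivity)]
        simp_rw [hp]
        refine ENNReal.ofReal_le_of_le_toReal ?_
        rw [ENNReal.tsum_toReal_eq fun _ => ENNReal.ofReal_ne_top]
        refine (tsum_congr fun m => (ENNReal.toReal_ofReal ?_).symm).le
        exact mul_nonneg (by positivity)
          (ProbabilityTheory.gammaPDFReal_nonneg (hm m) (by positivity) _)
    _ ≤ ∫⁻ y, ∑' m : ℕ, ENNReal.ofReal (Real.exp (-c) * (c ^ m / Nat.factorial m)) *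
          ProbabilityTheory.gammaPDF (m + a + 1) (1 / (1 - r)) y := setLIntegral_le_lintegral _ _
    _ = ∑' m : ℕ, ENNReal.ofReal (Real.exp (-c) * (c ^ m / Nat.factorial m)) := by
        have hg (m : ℕ) : Measurable (ProbabilityTheory.gammaPDF (m + a + 1) (1 / (1 - r))) :=
          (ProbabilityTheory.measurable_gammaPDFReal _ _).ennreal_ofReal
        rw [lintegral_tsum fun m => ((hg m).const_mul _).aemeasurable]
        refine tsum_congr fun m => ?_
        rw [lintegral_const_mul _ (hg m),
          ProbabilityTheory.lintegral_gammaPDF_eq_one (hm m) (by positivity), mul_one]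
    _ = 1 := by
        rw [← ENNReal.ofReal_tsum_of_nonneg (fun m => by positivity) hsum.summable, hsum.tsum_eq,
          ENNReal.ofReal_one]

lemma measurable_laguerreHeat (a x : ℝ) :
    Measurable fun p : ℝ × ℝ => laguerreHeat a x p.1 p.2 := by
  have : Measurable fun p : ℝ × ℝ => besselI a (2 * Real.sqrt (p.1 * x * p.2) / (1 - p.1)) :=
    (measurable_besselI a).comp (by fun_prop)
  unfold laguerreHeat
  fun_prop

lemma integrableOn_laguerreHeat {a x r : ℝ} (ha : -1 < a) (hx : 0 < x)
    (hr : r ∈ Ioo (0 : ℝ) 1) : IntegrableOn (laguerreHeat a x r) (Ioi 0) := by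
  have hmeas : Measurable (laguerreHeat a x r) :=
    (measurable_laguerreHeat a x).comp measurable_prodMk_left
  refine ⟨hmeas.aestronglyMeasurable, ?_⟩
  rw [hasFiniteIntegral_iff_ofReal ((ae_restrict_iff' measurableSet_Ioi).2
    (.of_forall fun y hy => laguerreHeat_nonneg ha hx hr hy))]
  exact (lintegral_laguerreHeat_le_one ha hx hr).trans_lt ENNReal.one_lt_top

lemma integral_laguerreHeat_le_one {a x r : ℝ} (ha : -1 < a) (hx : 0 < x)
    (hr : r ∈ Ioo (0 : ℝ) 1) : ∫ y in Ioi 0, laguerreHeat a x r y ≤ 1 := by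
  rw [integral_eq_lintegral_of_nonneg_ae ((ae_restrict_iff' measurableSet_Ioi).2
    (.of_forall fun y hy => laguerreHeat_nonneg ha hx hr hy))
    (integrableOn_laguerreHeat ha hx hr).aestronglyMeasurable]
  exact ENNReal.toReal_le_of_le_ofReal zero_le_one
    (by simpa using lintegral_laguerreHeat_le_one ha hx hr)

/-- A majorant, uniform for `u` close to `t`, of the `u`-derivative of the subordination density
`u e^{-u²/(4s)} s^{-3/2} ds` in the variable `r = e^{-s}`. -/
noncomputable def subordMajorant (t r : ℝ) : ℝ :=
  (1 + 2 * (t ^ 2 / (-Real.log r))) * Real.exp (t ^ 2 / (16 * Real.log r)) /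
    (-Real.log r) ^ ((3 : ℝ) / 2) / r

lemma measurable_subordMajorant (t : ℝ) : Measurable (subordMajorant t) := by
  unfold subordMajorant
  fun_prop

lemma subordMajorant_nonneg (t : ℝ) {r : ℝ} (hr : r ∈ Ioo (0 : ℝ) 1) :
    0 ≤ subordMajorant t r := by
  have hl : 0 < -Real.log r := neg_pos.2 (Real.log_neg hr.1 hr.2)
  have hr0 := hr.1
  unfold subordMajorant
  positivity

lemma image_exp_neg_div_sq {t : ℝ} (ht : 0 < t) :
    (fun v : ℝ => Real.exp (-(t / v) ^ 2)) '' Ioi 0 = Ioo 0 1 := by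
  ext r
  constructor
  · rintro ⟨v, hv, rfl⟩
    have hv : 0 < v := hv
    refine ⟨Real.exp_pos _, ?_⟩
    rw [← Real.exp_zero, Real.exp_lt_exp]
    exact neg_neg_iff_pos.2 (by positivity)
  · rintro ⟨hr0, hr1⟩
    have hl : 0 < -Real.log r := neg_pos.2 (Real.log_neg hr0 hr1)
    refine ⟨t / Real.sqrt (-Real.log r), div_pos ht (Real.sqrt_pos.2 hl), ?_⟩
    simp only
    rw [div_div_cancel₀ ht.ne', Real.sq_sqrt hl.le, neg_neg, Real.exp_log hr0]

lemma injOn_exp_neg_div_sq {t : ℝ} (ht : 0 < t) :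
    InjOn (fun v : ℝ => Real.exp (-(t / v) ^ 2)) (Ioi 0) := by
  intro v hv w hw h
  have hv : 0 < v := hv
  have hw : 0 < w := hw
  have h1 : (t / v) ^ 2 = (t / w) ^ 2 := neg_injective (Real.exp_injective h)
  have h2 : t / v = t / w := (sq_eq_sq₀ (by positivity) (by positivity)).1 h1
  rw [div_eq_div_iff hv.ne' hw.ne'] at h2
  exact (mul_left_cancel₀ ht.ne' h2).symm

lemma hasDerivAt_exp_neg_div_sq (t : ℝ) {v : ℝ} (hv : v ≠ 0) :
    HasDerivAt (fun v : ℝ => Real.exp (-(t / v) ^ 2))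
      (Real.exp (-(t / v) ^ 2) * (2 * t ^ 2 / v ^ 3)) v := by
  have h := ((((hasDerivAt_inv hv).const_mul t).pow 2).neg).exp
  simp only [← div_eq_mul_inv, Pi.pow_apply, Pi.neg_apply] at h
  convert! h using 2
  push_cast
  field_simp

lemma abs_deriv_mul_subordMajorant {t v : ℝ} (ht : 0 < t) (hv : 0 < v) :
    |Real.exp (-(t / v) ^ 2) * (2 * t ^ 2 / v ^ 3)| * subordMajorant t (Real.exp (-(t / v) ^ 2)) =
      (2 / t) * ((1 + 2 * v ^ 2) * Real.exp (-(1 / 16) * v ^ 2)) := by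
  rw [abs_of_pos (by positivity), subordMajorant, Real.log_exp, neg_neg]
  have h1 : ((t / v) ^ 2) ^ ((3 : ℝ) / 2) = (t / v) ^ 3 := by
    rw [← Real.rpow_natCast (t / v) 2, ← Real.rpow_mul (by positivity), ← Real.rpow_natCast]
    norm_num
  have h2 : t ^ 2 / (16 * -(t / v) ^ 2) = -(1 / 16) * v ^ 2 := by
    field_simp
  rw [h1, h2]
  have := Real.exp_ne_zero (-(t / v) ^ 2)
  field_simp

lemma integrableOn_one_add_sq_mul_exp :
    IntegrableOn (fun v : ℝ => (1 + 2 * v ^ 2) * Real.exp (-(1 / 16) * v ^ 2)) (Ioi 0) := by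
  have h0 := integrable_exp_neg_mul_sq (b := 1 / 16) (by norm_num)
  have h2 := integrable_rpow_mul_exp_neg_mul_sq (b := 1 / 16) (by norm_num) (s := 2) (by norm_num)
  refine ((h0.add (h2.const_mul 2)).congr (.of_forall fun v => ?_)).integrableOn
  simp only [Pi.add_apply, Real.rpow_two]
  ring

lemma integrableOn_subordMajorant {t : ℝ} (ht : 0 < t) :
    IntegrableOn (subordMajorant t) (Ioo 0 1) := by
  rw [← image_exp_neg_div_sq ht,
    integrableOn_image_iff_integrableOn_abs_deriv_smul measurableSet_Ioi
    (fun v hv => (hasDerivAt_exp_neg_div_sq t (ne_of_gt hv)).hasDerivWithinAt)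
    (injOn_exp_neg_div_sq ht)]
  exact IntegrableOn.congr_fun (integrableOn_one_add_sq_mul_exp.const_mul (2 / t))
    (fun v hv => (abs_deriv_mul_subordMajorant ht hv).symm) measurableSet_Ioi

lemma integral_subordMajorant {t : ℝ} (ht : 0 < t) :
    ∫ r in Ioo 0 1, subordMajorant t r =
      2 / t * ∫ v in Ioi (0 : ℝ), (1 + 2 * v ^ 2) * Real.exp (-(1 / 16) * v ^ 2) := by
  rw [← image_exp_neg_div_sq ht, integral_image_eq_integral_abs_deriv_smul measurableSet_Ioi
    (fun v hv => (hasDerivAt_exp_neg_div_sq t (ne_of_gt hv)).hasDerivWithinAt)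
    (injOn_exp_neg_div_sq ht), ← integral_const_mul]
  exact setIntegral_congr_fun measurableSet_Ioi fun v hv => abs_deriv_mul_subordMajorant ht hv

/-- The subordination density `u e^{-u²/(4s)} s^{-3/2} ds` in the variable `r = e^{-s}`. -/
noncomputable def subordDensity (u r : ℝ) : ℝ :=
  u * Real.exp (u ^ 2 / (4 * Real.log r)) / (-Real.log r) ^ ((3 : ℝ) / 2) / r

/-- The derivative of `subordDensity u r` in `u`. -/
noncomputable def subordDensityDeriv (u r : ℝ) : ℝ :=
  (1 + u ^ 2 / (2 * Real.log r)) * Real.exp (u ^ 2 / (4 * Real.log r)) /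
    (-Real.log r) ^ ((3 : ℝ) / 2) / r

lemma measurable_subordDensity (u : ℝ) : Measurable (subordDensity u) := by
  unfold subordDensity
  fun_prop

lemma measurable_subordDensityDeriv (u : ℝ) : Measurable (subordDensityDeriv u) := by
  unfold subordDensityDeriv
  fun_prop

lemma hasDerivAt_subordDensity (u r : ℝ) :
    HasDerivAt (fun u => subordDensity u r) (subordDensityDeriv u r) u := by
  have h := (((hasDerivAt_id u).mul
    (((hasDerivAt_pow 2 u).div_const (4 * Real.log r)).exp)).div_const
      ((-Real.log r) ^ ((3 : ℝ) / 2))).div_const r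
  simp only [id, subordDensity] at h ⊢
  convert! h using 1
  unfold subordDensityDeriv
  congr 2
  push_cast
  ring

lemma exp_sq_div_log_le {t u r : ℝ} (ht : 0 < t) (hr : r ∈ Ioo (0 : ℝ) 1) (hu : t / 2 ≤ u) :
    Real.exp (u ^ 2 / (4 * Real.log r)) ≤ Real.exp (t ^ 2 / (16 * Real.log r)) := by
  have hl : Real.log r < 0 := Real.log_neg hr.1 hr.2
  have h : t ^ 2 / (16 * Real.log r) = t ^ 2 / 4 / (4 * Real.log r) := by
    rw [div_div, ← mul_assoc]
    norm_num
  rw [Real.exp_le_exp, h]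
  exact div_le_div_of_nonpos_of_le (by linarith) (by nlinarith)

lemma abs_subordDensityDeriv_le {t u r : ℝ} (ht : 0 < t) (hr : r ∈ Ioo (0 : ℝ) 1)
    (hu : t / 2 ≤ u) (hu' : u ≤ 2 * t) : |subordDensityDeriv u r| ≤ subordMajorant t r := by
  have hl : 0 < -Real.log r := neg_pos.2 (Real.log_neg hr.1 hr.2)
  have hr0 := hr.1
  rw [subordDensityDeriv, subordMajorant, abs_div, abs_div, abs_mul, abs_of_pos hr0, Real.abs_exp,
    abs_of_pos (Real.rpow_pos_of_pos hl _)]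
  have h1 : |1 + u ^ 2 / (2 * Real.log r)| ≤ 1 + 2 * (t ^ 2 / (-Real.log r)) := by
    have e : u ^ 2 / (2 * Real.log r) = -(u ^ 2 / 2 / (-Real.log r)) := by
      have := hl.ne'
      have : Real.log r ≠ 0 := by linarith
      field_simp
    have h2 : u ^ 2 / 2 / (-Real.log r) ≤ 2 * (t ^ 2 / (-Real.log r)) := by
      rw [← mul_div_assoc]
      gcongr
      nlinarith
    have h3 : 0 ≤ u ^ 2 / 2 / (-Real.log r) := by positivity
    rw [e, abs_le]
    constructor <;> linarith
  have h4 := exp_sq_div_log_le ht hr hu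
  gcongr

lemma abs_subordDensity_le {t r : ℝ} (ht : 0 < t) (hr : r ∈ Ioo (0 : ℝ) 1) :
    |subordDensity t r| ≤ t * subordMajorant t r := by
  have hl : 0 < -Real.log r := neg_pos.2 (Real.log_neg hr.1 hr.2)
  have hr0 := hr.1
  rw [subordDensity, subordMajorant, ← mul_div_assoc, ← mul_div_assoc,
    abs_of_nonneg (by positivity)]
  have h4 := exp_sq_div_log_le ht hr (show t / 2 ≤ t by linarith)
  have h5 : 1 ≤ 1 + 2 * (t ^ 2 / (-Real.log r)) := by
    have : 0 ≤ t ^ 2 / (-Real.log r) := by positivity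
    linarith
  gcongr
  calc Real.exp (t ^ 2 / (4 * Real.log r)) ≤ 1 * Real.exp (t ^ 2 / (16 * Real.log r)) := by
        rwa [one_mul]
    _ ≤ _ := by gcongr

/-- The Laguerre heat kernel on `(0,∞)^d`. -/
noncomputable def laguerreHeatProd {d : ℕ} (α x : Fin d → ℝ) (r : ℝ) (y : Fin d → ℝ) : ℝ :=
  ∏ j, laguerreHeat (α j) (x j) r (y j)

lemma measurable_laguerreHeatProd {d : ℕ} (α x : Fin d → ℝ) :
    Measurable fun p : ℝ × (Fin d → ℝ) => laguerreHeatProd α x p.1 p.2 :=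
  Finset.measurable_prod _ fun j _ =>
    (measurable_laguerreHeat (α j) (x j)).comp (by fun_prop : Measurable fun p : ℝ × (Fin d → ℝ) =>
      (p.1, p.2 j))

lemma plKernel_eq_integral_subordDensity {d : ℕ} (α x : Fin d → ℝ) (u : ℝ) (y : Fin d → ℝ) :
    plKernel d α u x y = (1 / (2 * Real.sqrt π)) *
      ∫ r in Ioo (0 : ℝ) 1, subordDensity u r * laguerreHeatProd α x r y := by
  rw [plKernel]
  congr 2
  funext r
  simp only [subordDensity, laguerreHeatProd, laguerreHeat]
  rw [Finset.prod_mul_distrib (f := fun _ => (1 - r)⁻¹), Finset.prod_const, Finset.card_univ,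
    Fintype.card_fin]
  ring

section Orthant

variable {d : ℕ} {α x : Fin d → ℝ}

lemma measurableSet_posOrthant (d : ℕ) : MeasurableSet (posOrthant d) :=
  MeasurableSet.univ_pi fun _ => measurableSet_Ioi

lemma volume_restrict_posOrthant (d : ℕ) :
    (volume : Measure (Fin d → ℝ)).restrict (posOrthant d) =
      Measure.pi fun _ => volume.restrict (Ioi 0) :=
  Measure.restrict_pi_pi _ _

lemma laguerreHeatProd_nonneg (hα : ∀ j, -1 < α j) (hx : x ∈ posOrthant d) {r : ℝ}
    (hr : r ∈ Ioo (0 : ℝ) 1) {y : Fin d → ℝ} (hy : y ∈ posOrthant d) :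
    0 ≤ laguerreHeatProd α x r y :=
  Finset.prod_nonneg fun j _ => laguerreHeat_nonneg (hα j) (hx j trivial) hr (hy j trivial)

lemma integrableOn_laguerreHeatProd (hα : ∀ j, -1 < α j) (hx : x ∈ posOrthant d) {r : ℝ}
    (hr : r ∈ Ioo (0 : ℝ) 1) : IntegrableOn (laguerreHeatProd α x r) (posOrthant d) := by
  rw [IntegrableOn, volume_restrict_posOrthant]
  exact Integrable.fintype_prod fun j => integrableOn_laguerreHeat (hα j) (hx j trivial) hr

lemma integral_laguerreHeatProd_le_one (hα : ∀ j, -1 < α j) (hx : x ∈ posOrthant d) {r : ℝ}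
    (hr : r ∈ Ioo (0 : ℝ) 1) : ∫ y in posOrthant d, laguerreHeatProd α x r y ≤ 1 := by
  rw [volume_restrict_posOrthant]
  simp only [laguerreHeatProd]
  rw [integral_fintype_prod_eq_prod fun j y => laguerreHeat (α j) (x j) r y]
  exact Finset.prod_le_one (fun j _ => setIntegral_nonneg measurableSet_Ioi fun y hy =>
    laguerreHeat_nonneg (hα j) (hx j trivial) hr hy)
    fun j _ => integral_laguerreHeat_le_one (hα j) (hx j trivial) hr

lemma integral_norm_majorant_mul_heat_le (hα : ∀ j, -1 < α j) (hx : x ∈ posOrthant d) {t r : ℝ}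
    (hr : r ∈ Ioo (0 : ℝ) 1) :
    ∫ y in posOrthant d, ‖subordMajorant t r * laguerreHeatProd α x r y‖ ≤ subordMajorant t r := by
  have h : ∫ y in posOrthant d, ‖subordMajorant t r * laguerreHeatProd α x r y‖ =
      subordMajorant t r * ∫ y in posOrthant d, laguerreHeatProd α x r y := by
    rw [← integral_const_mul]
    refine setIntegral_congr_fun (measurableSet_posOrthant d) fun y hy => ?_
    exact Real.norm_of_nonneg (mul_nonneg (subordMajorant_nonneg t hr)
      (laguerreHeatProd_nonneg hα hx hr hy))
  rw [h]
  exact mul_le_of_le_one_right (subordMajorant_nonneg t hr)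
    (integral_laguerreHeatProd_le_one hα hx hr)

lemma integrable_majorant_mul_heat (hα : ∀ j, -1 < α j) (hx : x ∈ posOrthant d) {t : ℝ}
    (ht : 0 < t) :
    Integrable (fun p : ℝ × (Fin d → ℝ) => subordMajorant t p.1 * laguerreHeatProd α x p.1 p.2)
      ((volume.restrict (Ioo 0 1)).prod (volume.restrict (posOrthant d))) := by
  have hm : AEStronglyMeasurable
      (fun p : ℝ × (Fin d → ℝ) => subordMajorant t p.1 * laguerreHeatProd α x p.1 p.2)
      ((volume.restrict (Ioo 0 1)).prod (volume.restrict (posOrthant d))) :=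
    (((measurable_subordMajorant t).comp measurable_fst).mul
      (measurable_laguerreHeatProd α x)).aestronglyMeasurable
  refine (integrable_prod_iff hm).2 ⟨?_, ?_⟩
  · filter_upwards [ae_restrict_mem measurableSet_Ioo] with r hr
    exact (integrableOn_laguerreHeatProd hα hx hr).const_mul _
  · refine (integrableOn_subordMajorant ht).mono' hm.norm.integral_prod_right' ?_
    filter_upwards [ae_restrict_mem measurableSet_Ioo] with r hr
    rw [Real.norm_of_nonneg (integral_nonneg fun _ => norm_nonneg _)]
    exact integral_norm_majorant_mul_heat_le hα hx hr

lemma integral_integral_majorant_mul_heat_le (hα : ∀ j, -1 < α j) (hx : x ∈ posOrthant d) {t : ℝ}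
    (ht : 0 < t) :
    ∫ y in posOrthant d, ∫ r in Ioo 0 1, subordMajorant t r * laguerreHeatProd α x r y ≤
      ∫ r in Ioo 0 1, subordMajorant t r := by
  have hI := integrable_majorant_mul_heat hα hx ht
  rw [← integral_integral_swap hI]
  refine integral_mono_ae hI.integral_prod_left (integrableOn_subordMajorant ht) ?_
  filter_upwards [ae_restrict_mem measurableSet_Ioo] with r hr
  exact ((Real.le_norm_self _).trans (norm_integral_le_integral_norm _)).trans
    (integral_norm_majorant_mul_heat_le hα hx hr)

lemma abs_deriv_plKernel_le (hα : ∀ j, -1 < α j) (hx : x ∈ posOrthant d) {t : ℝ} (ht : 0 < t)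
    {y : Fin d → ℝ} (hy : y ∈ posOrthant d)
    (hint : IntegrableOn (fun r => subordMajorant t r * laguerreHeatProd α x r y) (Ioo 0 1)) :
    |deriv (fun u => plKernel d α u x y) t| ≤ (1 / (2 * Real.sqrt π)) *
      ∫ r in Ioo 0 1, subordMajorant t r * laguerreHeatProd α x r y := by
  have hheat : Measurable fun r => laguerreHeatProd α x r y :=
    (measurable_laguerreHeatProd α x).comp measurable_prodMk_right
  have hmul {a b r : ℝ} (hr : r ∈ Ioo (0 : ℝ) 1) (hab : |a| ≤ b) :
      ‖a * laguerreHeatProd α x r y‖ ≤ b * laguerreHeatProd α x r y := by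
    have h0 := laguerreHeatProd_nonneg hα hx hr hy
    rw [norm_mul, Real.norm_of_nonneg h0, Real.norm_eq_abs]
    gcongr
  have hbound : ∀ᵐ r ∂volume.restrict (Ioo (0 : ℝ) 1), ∀ u ∈ Metric.ball t (t / 2),
      ‖subordDensityDeriv u r * laguerreHeatProd α x r y‖ ≤
        subordMajorant t r * laguerreHeatProd α x r y := by
    filter_upwards [ae_restrict_mem measurableSet_Ioo] with r hr u hu
    rw [Metric.mem_ball, Real.dist_eq, abs_lt] at hu
    exact hmul hr (abs_subordDensityDeriv_le ht hr (by linarith) (by linarith))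
  have hF : Integrable (fun r => subordDensity t r * laguerreHeatProd α x r y)
      (volume.restrict (Ioo 0 1)) := by
    refine (hint.const_mul t).mono'
      ((measurable_subordDensity t).mul hheat).aestronglyMeasurable ?_
    filter_upwards [ae_restrict_mem measurableSet_Ioo] with r hr
    rw [← mul_assoc]
    exact hmul hr (abs_subordDensity_le ht hr)
  have hderiv := (hasDerivAt_integral_of_dominated_loc_of_deriv_le
    (F := fun u r => subordDensity u r * laguerreHeatProd α x r y)
    (F' := fun u r => subordDensityDeriv u r * laguerreHeatProd α x r y)
    (Metric.ball_mem_nhds t (half_pos ht))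
    (.of_forall fun u => ((measurable_subordDensity u).mul hheat).aestronglyMeasurable) hF
    ((measurable_subordDensityDeriv t).mul hheat).aestronglyMeasurable hbound hint
    (.of_forall fun r u _ => (hasDerivAt_subordDensity u r).mul_const _)).2
  simp_rw [plKernel_eq_integral_subordDensity]
  rw [(hderiv.const_mul _).deriv, abs_mul, abs_of_pos (by positivity)]
  gcongr
  exact norm_integral_le_of_norm_le hint
    (hbound.mono fun r hr => hr t (Metric.mem_ball_self (half_pos ht)))

end Orthant

theorem laguerre_poisson_kernel_deriv_L1_large_region
    (d : ℕ) (hd : 1 ≤ d) (α : Fin d → ℝ) (hα : ∀ j, -(1 / 2 : ℝ) < α j) :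
    ∃ C > 0, ∀ t > (0 : ℝ), ∀ x ∈ posOrthant d,
      (∫ y in {y : Fin d → ℝ | (∀ j, 0 < y j) ∧
          ∀ j, 1 - Real.exp (-t) < Real.sqrt (Real.exp (-t) * x j * y j)},
        |deriv (fun u => plKernel d α u x y) t|) ≤ C / t := by
  set K := ∫ v in Ioi (0 : ℝ), (1 + 2 * v ^ 2) * Real.exp (-(1 / 16) * v ^ 2) with hK
  have hK0 : 0 ≤ K := integral_nonneg fun v => by positivity
  refine ⟨1 / (2 * Real.sqrt π) * (2 * K) + 1, by positivity, fun t ht x hx => ?_⟩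
  have hα' (j) : -1 < α j := by linarith [hα j]
  have hsub : {y : Fin d → ℝ | (∀ j, 0 < y j) ∧
      ∀ j, 1 - Real.exp (-t) < Real.sqrt (Real.exp (-t) * x j * y j)} ⊆ posOrthant d :=
    fun y hy j _ => hy.1 j
  have hI := integrable_majorant_mul_heat hα' hx ht
  have hg := hI.integral_prod_right.const_mul (1 / (2 * Real.sqrt π))
  have hle : ∀ᵐ y ∂volume.restrict (posOrthant d),
      |deriv (fun u => plKernel d α u x y) t| ≤ (1 / (2 * Real.sqrt π)) *
        ∫ r in Ioo 0 1, subordMajorant t r * laguerreHeatProd α x r y := by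
    filter_upwards [ae_restrict_mem (measurableSet_posOrthant d), hI.prod_left_ae] with y hy hy'
    exact abs_deriv_plKernel_le hα' hx ht hy hy'
  calc _ ≤ ∫ y in {y : Fin d → ℝ | (∀ j, 0 < y j) ∧
          ∀ j, 1 - Real.exp (-t) < Real.sqrt (Real.exp (-t) * x j * y j)},
          (1 / (2 * Real.sqrt π)) *
            ∫ r in Ioo 0 1, subordMajorant t r * laguerreHeatProd α x r y :=
        integral_mono_of_nonneg (.of_forall fun _ => abs_nonneg _)
          (hg.mono_measure (Measure.restrict_mono hsub le_rfl))
          (ae_restrict_of_ae_restrict_of_subset hsub hle)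
    _ ≤ ∫ y in posOrthant d, (1 / (2 * Real.sqrt π)) *
          ∫ r in Ioo 0 1, subordMajorant t r * laguerreHeatProd α x r y :=
        setIntegral_mono_set hg (hle.mono fun y hy => (abs_nonneg _).trans hy)
          hsub.eventuallyLE
    _ ≤ 1 / (2 * Real.sqrt π) * (2 / t * K) := by
        rw [integral_const_mul, hK, ← integral_subordMajorant ht]
        gcongr
        exact integral_integral_majorant_mul_heat_le hα' hx ht
    _ = 1 / (2 * Real.sqrt π) * (2 * K) / t := by ring
    _ ≤ _ := by
        gcongr
        linarith
end

section
/- Let d ≥ 1, let α = (α_1,…,α_d) be a multi-index with α_j > −1/2 for each j, and let k be a positive integer. There exists a constant C > 0, depending only on α, d and k, such that for every t > 0 and every x ∈ (0,∞)^d, ∫_{(0,∞)^d} |∂^k p_t^α(x,y)/∂t^k| dy ≤ C/t^k, where ∂^k/∂t^k denotes the k-th derivative of t ↦ p_t^α(x,y). -/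
open MeasureTheory Real Set

/-- Polynomials whose `j`-th one satisfies `(d/du)^j (u e^{-au²}) = u^{1-j} P_j(au²) e^{-au²}`. -/
noncomputable def gaussPoly : ℕ → Polynomial ℝ
  | 0 => 1
  | j + 1 => Polynomial.C (1 - (j : ℝ)) * gaussPoly j +
      2 * Polynomial.X * (Polynomial.derivative (gaussPoly j) - gaussPoly j)

/-- The `j`-th derivative in `u` of `u e^{-au²}`, for `u > 0`. -/
noncomputable def gaussDeriv (j : ℕ) (a u : ℝ) : ℝ :=
  u / u ^ j * (gaussPoly j).eval (a * u ^ 2) * exp (-(a * u ^ 2))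

theorem hasDerivAt_gaussDeriv (j : ℕ) (a : ℝ) {u : ℝ} (hu : u ≠ 0) :
    HasDerivAt (gaussDeriv j a) (gaussDeriv (j + 1) a u) u := by
  have hsq : HasDerivAt (fun v : ℝ => a * v ^ 2) (2 * a * u) u := by
    refine ((hasDerivAt_pow 2 u).const_mul a).congr_deriv ?_
    norm_num
    ring
  have hquot : HasDerivAt (fun v : ℝ => v / v ^ j) ((1 - j) / u ^ j) u := by
    refine ((hasDerivAt_id u).div (hasDerivAt_pow j u) (pow_ne_zero _ hu)).congr_deriv ?_
    rcases j with _ | j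
    · simp
    · simp only [id, Nat.add_sub_cancel]
      field_simp
      push_cast
      ring
  have hpoly := ((gaussPoly j).hasDerivAt (a * u ^ 2)).comp u hsq
  refine ((hquot.mul hpoly).mul hsq.neg.exp).congr_deriv ?_
  simp only [gaussDeriv, gaussPoly, Function.comp_apply, Polynomial.eval_add, Polynomial.eval_mul,
    Polynomial.eval_sub, Polynomial.eval_C, Polynomial.eval_X, Polynomial.eval_ofNat, pow_succ u j,
    Pi.mul_apply, Pi.neg_apply]
  field_simp
  ring

theorem exists_abs_eval_le_mul_exp (p : Polynomial ℝ) :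
    ∃ C > 0, ∀ w : ℝ, 0 ≤ w → |p.eval w| ≤ C * exp (w / 2) := by
  induction p using Polynomial.induction_on' with
  | add p q hp hq =>
    obtain ⟨C, hC, h⟩ := hp
    obtain ⟨D, hD, h'⟩ := hq
    refine ⟨C + D, by positivity, fun w hw => ?_⟩
    rw [Polynomial.eval_add, add_mul]
    exact (abs_add_le _ _).trans (add_le_add (h w hw) (h' w hw))
  | monomial n a =>
    refine ⟨(|a| + 1) * (2 ^ n * n.factorial), by positivity, fun w hw => ?_⟩
    have h := Real.pow_div_factorial_le_exp (x := w / 2) (by positivity) n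
    rw [div_pow, div_div, div_le_iff₀ (by positivity)] at h
    rw [Polynomial.eval_monomial, abs_mul, abs_of_nonneg (pow_nonneg hw n), mul_assoc]
    refine mul_le_mul (by linarith) (h.trans_eq (by ring)) (by positivity) (by positivity)

theorem abs_gaussDeriv_le {j : ℕ} {C : ℝ}
    (hC : ∀ w : ℝ, 0 ≤ w → |(gaussPoly j).eval w| ≤ C * exp (w / 2)) {a u : ℝ} (ha : 0 ≤ a)
    (hu : 0 < u) : |gaussDeriv j a u| ≤ C * (u / u ^ j) * exp (-(a * u ^ 2 / 2)) := by
  have h := hC (a * u ^ 2) (by positivity)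
  have he : exp (-(a * u ^ 2 / 2)) = exp (a * u ^ 2 / 2) * exp (-(a * u ^ 2)) := by
    rw [← exp_add]
    ring_nf
  rw [gaussDeriv, abs_mul, abs_mul, abs_of_pos (exp_pos _), abs_of_pos (by positivity), he]
  calc u / u ^ j * |(gaussPoly j).eval (a * u ^ 2)| * exp (-(a * u ^ 2))
      ≤ u / u ^ j * (C * exp (a * u ^ 2 / 2)) * exp (-(a * u ^ 2)) := by gcongr
    _ = _ := by ring

theorem measurable_gaussDeriv (j : ℕ) (u : ℝ) : Measurable fun a => gaussDeriv j a u := by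
  unfold gaussDeriv
  fun_prop

/-- Locally uniform domination of all the derivatives of `u e^{-au²}`. -/
theorem exists_abs_gaussDeriv_le_Ioo (j : ℕ) {t : ℝ} (ht : 0 < t) :
    ∃ M, ∀ a u : ℝ, 0 ≤ a → u ∈ Ioo (t / 2) (2 * t) →
      |gaussDeriv j a u| ≤ M * exp (-(a * (t / 2) ^ 2 / 2)) := by
  obtain ⟨C, hC, h⟩ := exists_abs_eval_le_mul_exp (gaussPoly j)
  refine ⟨C * (2 * t / (t / 2) ^ j), fun a u ha hu => ?_⟩
  have hu0 : 0 < u := (half_pos ht).trans hu.1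
  refine (abs_gaussDeriv_le h ha hu0).trans ?_
  have h1 := hu.1.le
  have h2 := hu.2.le
  gcongr

section Subordination

variable {R Y : Type*} [MeasurableSpace R] [MeasurableSpace Y] {μ : Measure R} {a : R → ℝ}

theorem hasDerivAt_integral_gaussDeriv (ha : Measurable a) (ha0 : ∀ᵐ r ∂μ, 0 ≤ a r) {V : R → ℝ}
    (hV : Measurable V) {t : ℝ} (ht : 0 < t)
    (hint : Integrable (fun r => V r * exp (-(a r * (t / 2) ^ 2 / 2))) μ) (j : ℕ) {u : ℝ}
    (hu : u ∈ Ioo (t / 2) (2 * t)) :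
    HasDerivAt (fun v => ∫ r, gaussDeriv j (a r) v * V r ∂μ)
      (∫ r, gaussDeriv (j + 1) (a r) u * V r ∂μ) u := by
  have hmeas (i : ℕ) (v : ℝ) : AEStronglyMeasurable (fun r => gaussDeriv i (a r) v * V r) μ :=
    (((measurable_gaussDeriv i v).comp ha).mul hV).aestronglyMeasurable
  have hbd (i : ℕ) : ∃ M, ∀ᵐ r ∂μ, ∀ v ∈ Ioo (t / 2) (2 * t), ‖gaussDeriv i (a r) v * V r‖ ≤
      M * ‖V r * exp (-(a r * (t / 2) ^ 2 / 2))‖ := by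
    obtain ⟨M, hM⟩ := exists_abs_gaussDeriv_le_Ioo i ht
    refine ⟨M, ha0.mono fun r hr v hv => ?_⟩
    rw [norm_mul, norm_mul, Real.norm_of_nonneg (exp_pos _).le]
    calc ‖gaussDeriv i (a r) v‖ * ‖V r‖ ≤ M * exp (-(a r * (t / 2) ^ 2 / 2)) * ‖V r‖ := by
          gcongr
          exact hM _ _ hr hv
      _ = _ := by ring
  obtain ⟨M, hM⟩ := hbd j
  obtain ⟨M', hM'⟩ := hbd (j + 1)
  refine (hasDerivAt_integral_of_dominated_loc_of_deriv_le (isOpen_Ioo.mem_nhds hu)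
    (Filter.Eventually.of_forall (hmeas j)) ?_ (hmeas _ u) hM' (hint.norm.const_mul M') ?_).2
  · exact (hint.norm.const_mul M).mono' (hmeas j u) (hM.mono fun r hr => hr u hu)
  · refine Filter.Eventually.of_forall fun r v hv => ?_
    exact (hasDerivAt_gaussDeriv j (a r) ((half_pos ht).trans hv.1).ne').mul_const _

theorem iteratedDeriv_integral_eq (ha : Measurable a) (ha0 : ∀ᵐ r ∂μ, 0 ≤ a r) {V : R → ℝ}
    (hV : Measurable V) {t : ℝ} (ht : 0 < t)
    (hint : Integrable (fun r => V r * exp (-(a r * (t / 2) ^ 2 / 2))) μ) (j : ℕ) {u : ℝ}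
    (hu : u ∈ Ioo (t / 2) (2 * t)) :
    iteratedDeriv j (fun v => ∫ r, v * exp (-(a r * v ^ 2)) * V r ∂μ) u =
      ∫ r, gaussDeriv j (a r) u * V r ∂μ := by
  induction j generalizing u with
  | zero => simp [gaussDeriv, gaussPoly]
  | succ j ih =>
    rw [iteratedDeriv_succ]
    refine ((hasDerivAt_integral_gaussDeriv ha ha0 hV ht hint j hu).congr_of_eventuallyEq
      ?_).deriv
    filter_upwards [isOpen_Ioo.mem_nhds hu] with v hv using ih hv

variable {ν : Measure Y} [SFinite μ] [SFinite ν] {W : R → Y → ℝ}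

/-- Subordination estimate: an `L¹` bound for the `k`-th derivative of
`∫ u e^{-a(r)u²} W(r,y) dμ(r)` from the bound on the Gaussian averages of `‖W(r,·)‖₁`. -/
theorem lintegral_iteratedDeriv_le (ha : Measurable a) (ha0 : ∀ᵐ r ∂μ, 0 ≤ a r)
    (hW : Measurable (Function.uncurry W)) {A : ℝ}
    (hA : ∀ t > 0, ∫⁻ r, ∫⁻ y, ‖W r y‖ₑ * ENNReal.ofReal (exp (-(a r * t ^ 2 / 2))) ∂ν ∂μ ≤
      ENNReal.ofReal (A / t))
    {k : ℕ} {C : ℝ} (hC0 : 0 < C)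
    (hC : ∀ w : ℝ, 0 ≤ w → |(gaussPoly k).eval w| ≤ C * exp (w / 2)) {t : ℝ} (ht : 0 < t) :
    ∫⁻ y, ‖iteratedDeriv k (fun u => ∫ r, u * exp (-(a r * u ^ 2)) * W r y ∂μ) t‖ₑ ∂ν ≤
      ENNReal.ofReal (C * A / t ^ k) := by
  have hmeas (s : ℝ) : Measurable (Function.uncurry fun r y =>
      ‖W r y‖ₑ * ENNReal.ofReal (exp (-(a r * s ^ 2 / 2)))) := by
    have : Measurable fun p : R × Y => W p.1 p.2 := hW
    unfold Function.uncurry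
    fun_prop
  have hWy (y : Y) : Measurable fun r => W r y := hW.comp (by fun_prop : Measurable fun r => (r, y))
  have hint : ∀ᵐ y ∂ν, Integrable (fun r => W r y * exp (-(a r * (t / 2) ^ 2 / 2))) μ := by
    have h := (hA (t / 2) (half_pos ht)).trans_lt ENNReal.ofReal_lt_top
    rw [lintegral_lintegral_swap (hmeas _).aemeasurable] at h
    filter_upwards [ae_lt_top (hmeas _).lintegral_prod_left h.ne] with y hy
    refine ⟨by have := hWy y; fun_prop, ?_⟩
    rw [hasFiniteIntegral_iff_enorm]
    refine lt_of_le_of_lt (lintegral_mono fun r => ?_) hy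
    rw [enorm_mul, Real.enorm_of_nonneg (exp_pos _).le]
  have hpt : ∀ᵐ y ∂ν, ‖iteratedDeriv k (fun u => ∫ r, u * exp (-(a r * u ^ 2)) * W r y ∂μ) t‖ₑ ≤
      ENNReal.ofReal (C * (t / t ^ k)) *
        ∫⁻ r, ‖W r y‖ₑ * ENNReal.ofReal (exp (-(a r * t ^ 2 / 2))) ∂μ := by
    filter_upwards [hint] with y hy
    rw [iteratedDeriv_integral_eq ha ha0 (hWy y) ht hy k ⟨by linarith, by linarith⟩,
      ← lintegral_const_mul' _ _ ENNReal.ofReal_ne_top]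
    refine (enorm_integral_le_lintegral_enorm _).trans (lintegral_mono_ae ?_)
    filter_upwards [ha0] with r hr
    have h := abs_gaussDeriv_le hC hr ht
    rw [enorm_mul, mul_left_comm, mul_comm, ← ENNReal.ofReal_mul (by positivity)]
    gcongr
    rw [← ofReal_norm]
    exact ENNReal.ofReal_le_ofReal h
  refine (lintegral_mono_ae hpt).trans ?_
  rw [lintegral_const_mul' _ _ ENNReal.ofReal_ne_top,
    ← lintegral_lintegral_swap (hmeas _).aemeasurable]
  refine (mul_le_mul_right (hA t ht) _).trans ?_
  rw [← ENNReal.ofReal_mul (by positivity)]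
  refine (congrArg _ ?_).le
  field_simp

end Subordination

theorem lintegral_fin_prod_eq_prod {n : ℕ} {μ : Fin n → Measure ℝ} [∀ i, SigmaFinite (μ i)]
    {f : Fin n → ℝ → ENNReal} (hf : ∀ i, Measurable (f i)) :
    ∫⁻ x, ∏ i, f i (x i) ∂Measure.pi μ = ∏ i, ∫⁻ x, f i x ∂μ i := by
  induction n with
  | zero => simp
  | succ n ih =>
    have hprod : Measurable fun x : Fin n → ℝ => ∏ i, f i.succ (x i) :=
      Finset.measurable_prod _ fun i _ => (hf _).comp (measurable_pi_apply i)
    rw [← ((measurePreserving_piFinSuccAbove μ 0).symm).lintegral_comp (by fun_prop),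
      Fin.prod_univ_succ, ← ih fun i => hf i.succ,
      ← lintegral_prod_mul (hf 0).aemeasurable hprod.aemeasurable]
    simp [MeasurableEquiv.piFinSuccAbove_symm_apply, Fin.insertNthEquiv, Fin.prod_univ_succ]

/-- The total mass of the subordination density against a Gaussian weight. -/
theorem lintegral_neg_log_rpow_mul_exp_le {t : ℝ} (ht : 0 < t) :
    ∫⁻ r in Ioo (0 : ℝ) 1, ENNReal.ofReal (((-log r) ^ ((3 : ℝ) / 2))⁻¹ / r *
      exp (-(-(4 * log r)⁻¹ * t ^ 2 / 2))) ≤ ENNReal.ofReal (2 * √(8 * π) / t) := by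
  have hlog {r : ℝ} (hr : r ∈ Ioo (0 : ℝ) 1) : 0 < -log r := neg_pos.2 (log_neg hr.1 hr.2)
  have hderiv : ∀ r ∈ Ioo (0 : ℝ) 1, HasDerivWithinAt (fun r => (-log r) ^ (-(1 / 2) : ℝ))
      (((-log r) ^ ((3 : ℝ) / 2))⁻¹ / r / 2) (Ioo 0 1) r := fun r hr => by
    refine (((hasDerivAt_log hr.1.ne').neg.rpow_const (p := -(1 / 2))
      (Or.inl (hlog hr).ne')).congr_deriv ?_).hasDerivWithinAt
    rw [← rpow_neg (hlog hr).le]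
    norm_num
    ring
  have hinj : InjOn (fun r => (-log r) ^ (-(1 / 2) : ℝ)) (Ioo 0 1) := fun r hr s hs h => by
    have h' := (rpow_left_inj (hlog hr).le (hlog hs).le (by norm_num)).1 h
    exact log_injOn_pos hr.1 hs.1 (neg_injective h')
  have hcov := lintegral_image_eq_lintegral_abs_deriv_mul measurableSet_Ioo hderiv hinj
    fun q => ENNReal.ofReal (2 * exp (-(t ^ 2 / 8) * q ^ 2))
  calc _ = ∫⁻ q in (fun r => (-log r) ^ (-(1 / 2) : ℝ)) '' Ioo 0 1,
        ENNReal.ofReal (2 * exp (-(t ^ 2 / 8) * q ^ 2)) := by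
        rw [hcov]
        refine setLIntegral_congr_fun measurableSet_Ioo fun r hr => ?_
        have hpos := hlog hr
        have hr0 := hr.1
        have hsq : ((-log r) ^ (-(1 / 2) : ℝ)) ^ 2 = (-log r)⁻¹ := by
          rw [← rpow_natCast, ← rpow_mul hpos.le, ← rpow_neg_one]
          norm_num
        have hnn : 0 ≤ ((-log r) ^ ((3 : ℝ) / 2))⁻¹ / r / 2 := by positivity
        simp only [hsq]
        rw [abs_of_nonneg hnn, ← ENNReal.ofReal_mul hnn]
        congr 1
        rw [show -(t ^ 2 / 8) * (-log r)⁻¹ = -(-(4 * log r)⁻¹ * t ^ 2 / 2) by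
          rw [mul_inv, inv_neg]; ring]
        ring
    _ ≤ ∫⁻ q, ENNReal.ofReal (2 * exp (-(t ^ 2 / 8) * q ^ 2)) := setLIntegral_le_lintegral _ _
    _ = ENNReal.ofReal (2 * √(8 * π) / t) := by
        rw [← ofReal_integral_eq_lintegral_ofReal
          ((integrable_exp_neg_mul_sq (by positivity)).const_mul 2)
          (Filter.Eventually.of_forall fun q => by positivity), integral_const_mul,
          integral_gaussian, div_div_eq_mul_div, sqrt_div (by positivity), sqrt_sq ht.le,
          mul_comm π 8, mul_div_assoc]

/-- A globally measurable version of `besselI`, which agrees with it on `[0,∞)`. -/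
noncomputable def besselAbs (ν z : ℝ) : ℝ :=
  (∑' m : ℕ, ‖(z / 2) ^ (2 * (m : ℝ) + ν) /
    (Nat.factorial m * Real.Gamma ((m : ℝ) + ν + 1))‖ₑ).toReal

theorem measurable_besselAbs (ν : ℝ) : Measurable (besselAbs ν) := by
  unfold besselAbs
  exact (Measurable.tsum fun m => by fun_prop).ennreal_toReal

theorem besselI_eq_besselAbs {ν z : ℝ} (hν : -1 < ν) (hz : 0 ≤ z) :
    besselI ν z = besselAbs ν z := by
  rw [besselI, besselAbs, ENNReal.tsum_toReal_eq fun m => enorm_ne_top]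
  refine tsum_congr fun m => ?_
  have : 0 < Gamma ((m : ℝ) + ν + 1) := Gamma_pos_of_pos (by linarith [m.cast_nonneg (α := ℝ)])
  rw [toReal_enorm, Real.norm_of_nonneg (by positivity)]

/-- One coordinate of the heat kernel, without the factor `(1 - r)⁻¹`. -/
noncomputable def laguerreFactor (ν x r y : ℝ) : ℝ :=
  (y / x) ^ (ν / 2) * exp (-((r * x + y) / (1 - r)) - ν * log r / 2) *
    besselAbs ν (2 * √(r * x * y) / (1 - r))

theorem measurable_laguerreFactor (ν x : ℝ) :
    Measurable fun p : ℝ × ℝ => laguerreFactor ν x p.1 p.2 := by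
  have := measurable_besselAbs ν
  unfold laguerreFactor
  fun_prop

theorem laguerre_term_eq (ν : ℝ) (m : ℕ) {x y r : ℝ} (hx : 0 < x) (hy : 0 < y)
    (hr : r ∈ Ioo (0 : ℝ) 1) :
    (y / x) ^ (ν / 2) * exp (-((r * x + y) / (1 - r)) - ν * log r / 2) / (1 - r) *
      ((2 * √(r * x * y) / (1 - r) / 2) ^ (2 * (m : ℝ) + ν) /
        (Nat.factorial m * Real.Gamma ((m : ℝ) + ν + 1))) =
    exp (-(r * x / (1 - r))) * ((r * x / (1 - r)) ^ m / Nat.factorial m) *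
      ((1 / (1 - r)) ^ (m + ν + 1) / Gamma (m + ν + 1)) *
      (y ^ ((m : ℝ) + ν + 1 - 1) * exp (-(1 / (1 - r) * y))) := by
  have hr0 := hr.1
  have hq : 0 < 1 - r := sub_pos.2 hr.2
  have hlog : log (√(r * x * y) / (1 - r)) = (log r + log x + log y) / 2 - log (1 - r) := by
    rw [log_div (by positivity) hq.ne', log_sqrt (by positivity),
      log_mul (by positivity) hy.ne', log_mul hr0.ne' hx.ne']
  have hkey : (y / x) ^ (ν / 2) * exp (-(ν * log r / 2)) / (1 - r) *
      (√(r * x * y) / (1 - r)) ^ (2 * (m : ℝ) + ν) =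
      (r * x / (1 - r)) ^ m * (1 / (1 - r)) ^ (m + ν + 1) * y ^ ((m : ℝ) + ν + 1 - 1) := by
    rw [← rpow_natCast, div_eq_mul_one_div _ (1 - r), rpow_def_of_pos (by positivity),
      rpow_def_of_pos (by positivity), rpow_def_of_pos (by positivity),
      rpow_def_of_pos (by positivity), rpow_def_of_pos (by positivity), hlog,
      log_div hy.ne' hx.ne', log_div (by positivity) hq.ne', log_mul hr0.ne' hx.ne',
      one_div, log_inv]
    nth_rewrite 1 [← exp_log hq]
    rw [← exp_neg]
    simp only [← exp_add]
    congr 1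
    ring
  rw [show 2 * √(r * x * y) / (1 - r) / 2 = √(r * x * y) / (1 - r) by ring,
    show -((r * x + y) / (1 - r)) - ν * log r / 2 =
      -(ν * log r / 2) + (-(r * x / (1 - r)) + -(1 / (1 - r) * y)) by ring, exp_add, exp_add]
  calc _ = ((y / x) ^ (ν / 2) * exp (-(ν * log r / 2)) / (1 - r) *
      (√(r * x * y) / (1 - r)) ^ (2 * (m : ℝ) + ν)) *
      (exp (-(r * x / (1 - r))) * exp (-(1 / (1 - r) * y))) /
        (Nat.factorial m * Gamma (m + ν + 1)) := by ring
    _ = _ := by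
      rw [hkey]
      ring

theorem lintegral_rpow_mul_exp_neg_mul_Ioi {b c : ℝ} (hb : 0 < b) (hc : 0 < c) :
    ∫⁻ y in Ioi (0 : ℝ), ENNReal.ofReal (y ^ (b - 1) * exp (-(c * y))) =
      ENNReal.ofReal ((1 / c) ^ b * Gamma b) := by
  rw [← integral_rpow_mul_exp_neg_mul_Ioi hb hc, ofReal_integral_eq_lintegral_ofReal]
  · simpa [IntegrableOn] using
      integrableOn_rpow_mul_exp_neg_mul_rpow (s := b - 1) (by linarith) one_pos hc
  · filter_upwards [ae_restrict_mem measurableSet_Ioi] with y hy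
    have : 0 < y := hy
    positivity

/-- The one-dimensional heat kernel has mass at most one. -/
theorem lintegral_laguerreFactor_le {ν x r : ℝ} (hν : -1 < ν) (hx : 0 < x)
    (hr : r ∈ Ioo (0 : ℝ) 1) :
    ∫⁻ y in Ioi (0 : ℝ), ‖laguerreFactor ν x r y / (1 - r)‖ₑ ≤ 1 := by
  have hr0 := hr.1
  have hq : 0 < 1 - r := sub_pos.2 hr.2
  set l := r * x / (1 - r) with hl
  have hl0 : 0 < l := by positivity
  have hpos (m : ℕ) : 0 < (m : ℝ) + ν + 1 := by linarith [m.cast_nonneg (α := ℝ)]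
  have hG (m : ℕ) := Gamma_pos_of_pos (hpos m)
  have hpt : ∀ y ∈ Ioi (0 : ℝ), ‖laguerreFactor ν x r y / (1 - r)‖ₑ ≤
      ∑' m : ℕ, ENNReal.ofReal (exp (-l) * (l ^ m / Nat.factorial m) *
        ((1 / (1 - r)) ^ (m + ν + 1) / Gamma (m + ν + 1))) *
        ENNReal.ofReal (y ^ ((m : ℝ) + ν + 1 - 1) * exp (-(1 / (1 - r) * y))) := by
    intro y hy
    have hy0 : 0 < y := hy
    rw [laguerreFactor, mul_div_right_comm, enorm_mul, besselAbs]
    refine (mul_le_mul_right ((Real.enorm_of_nonneg ENNReal.toReal_nonneg).trans_le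
      ENNReal.ofReal_toReal_le) _).trans ?_
    rw [← ENNReal.tsum_mul_left]
    refine (tsum_congr fun m => ?_).le
    have h1 := hG m
    rw [← enorm_mul, laguerre_term_eq ν m hx hy hr, Real.enorm_of_nonneg (by positivity),
      ENNReal.ofReal_mul (by positivity)]
  refine (setLIntegral_mono' measurableSet_Ioi hpt).trans ?_
  rw [lintegral_tsum fun m => by fun_prop]
  have hterm (m : ℕ) : ∫⁻ y in Ioi (0 : ℝ), ENNReal.ofReal (exp (-l) * (l ^ m / Nat.factorial m) *
        ((1 / (1 - r)) ^ (m + ν + 1) / Gamma (m + ν + 1))) *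
        ENNReal.ofReal (y ^ ((m : ℝ) + ν + 1 - 1) * exp (-(1 / (1 - r) * y))) =
      ENNReal.ofReal (exp (-l) * (l ^ m / Nat.factorial m)) := by
    have h1 := hG m
    rw [lintegral_const_mul' _ _ ENNReal.ofReal_ne_top,
      lintegral_rpow_mul_exp_neg_mul_Ioi (hpos m) (by positivity),
      ← ENNReal.ofReal_mul (by positivity), one_div_one_div, one_div, inv_rpow hq.le]
    congr 1
    field_simp
  have hsum : HasSum (fun m : ℕ => exp (-l) * (l ^ m / Nat.factorial m)) 1 := by
    have h := (NormedSpace.expSeries_div_hasSum_exp l).mul_left (exp (-l))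
    rwa [← Real.exp_eq_exp_ℝ, ← exp_add, neg_add_cancel, exp_zero] at h
  simp only [hterm]
  rw [← ENNReal.ofReal_tsum_of_nonneg (fun m => by positivity) hsum.summable, hsum.tsum_eq,
    ENNReal.ofReal_one]

/-- The weight multiplying `u e^{u² / (4 log r)}` in the Poisson–Laguerre kernel. -/
noncomputable def plWeight (d : ℕ) (α x : Fin d → ℝ) (r : ℝ) (y : Fin d → ℝ) : ℝ :=
  1 / (2 * √π) * (((-log r) ^ ((3 : ℝ) / 2))⁻¹ / r) *
    ∏ j, laguerreFactor (α j) (x j) r (y j) / (1 - r)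

theorem measurable_plWeight (d : ℕ) (α x : Fin d → ℝ) :
    Measurable (Function.uncurry (plWeight d α x)) := by
  have h (j : Fin d) : Measurable fun p : ℝ × (Fin d → ℝ) =>
      laguerreFactor (α j) (x j) p.1 (p.2 j) :=
    (measurable_laguerreFactor (α j) (x j)).comp
      (by fun_prop : Measurable fun p : ℝ × (Fin d → ℝ) => (p.1, p.2 j))
  have hprod : Measurable fun p : ℝ × (Fin d → ℝ) =>
      ∏ j, laguerreFactor (α j) (x j) p.1 (p.2 j) / (1 - p.1) :=
    Finset.measurable_prod _ fun j _ => (h j).div (by fun_prop)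
  unfold plWeight Function.uncurry
  fun_prop

theorem plKernel_eq_integral_plWeight {d : ℕ} {α : Fin d → ℝ} (hα : ∀ j, -1 < α j) (u : ℝ)
    (x y : Fin d → ℝ) :
    plKernel d α u x y =
      ∫ r in Ioo (0 : ℝ) 1, u * exp (-(-(4 * log r)⁻¹ * u ^ 2)) * plWeight d α x r y := by
  rw [plKernel, ← integral_const_mul]
  refine setIntegral_congr_fun measurableSet_Ioo fun r hr => ?_
  have hq : 0 < 1 - r := sub_pos.2 hr.2
  have hb (j : Fin d) := besselI_eq_besselAbs (hα j)
    (by positivity : 0 ≤ 2 * √(r * x j * y j) / (1 - r))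
  simp only [plWeight, laguerreFactor, hb, Finset.prod_div_distrib, Finset.prod_const,
    Finset.card_univ, Fintype.card_fin]
  rw [show -(-(4 * log r)⁻¹ * u ^ 2) = u ^ 2 / (4 * log r) by ring]
  ring

theorem lintegral_plWeight_le {d : ℕ} {α x : Fin d → ℝ} (hα : ∀ j, -1 < α j)
    (hx : x ∈ posOrthant d) {r : ℝ} (hr : r ∈ Ioo (0 : ℝ) 1) :
    ∫⁻ y in posOrthant d, ‖plWeight d α x r y‖ₑ ≤
      ENNReal.ofReal (1 / (2 * √π) * (((-log r) ^ ((3 : ℝ) / 2))⁻¹ / r)) := by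
  have hlog : 0 < -log r := neg_pos.2 (log_neg hr.1 hr.2)
  have hr0 := hr.1
  have hprod (f : Fin d → ℝ) : ‖∏ j, f j‖ₑ = ∏ j, ‖f j‖ₑ := by
    simp only [← ofReal_norm, norm_prod]
    exact ENNReal.ofReal_prod_of_nonneg fun j _ => norm_nonneg _
  have hmeas (j : Fin d) : Measurable fun s => ‖laguerreFactor (α j) (x j) r s / (1 - r)‖ₑ :=
    (((measurable_laguerreFactor (α j) (x j)).comp measurable_prodMk_left).div_const _).enorm
  simp only [plWeight, enorm_mul _ (∏ j, _), hprod]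
  rw [lintegral_const_mul' _ _ enorm_ne_top, Real.enorm_of_nonneg (by positivity), posOrthant,
    volume_pi, Measure.restrict_pi_pi, lintegral_fin_prod_eq_prod hmeas]
  refine mul_le_of_le_one_right' (Finset.prod_le_one' fun j _ => ?_)
  exact lintegral_laguerreFactor_le (hα j) (hx j trivial) hr

theorem lintegral_lintegral_plWeight_mul_exp_le {d : ℕ} {α x : Fin d → ℝ} (hα : ∀ j, -1 < α j)
    (hx : x ∈ posOrthant d) {t : ℝ} (ht : 0 < t) :
    ∫⁻ r in Ioo (0 : ℝ) 1, ∫⁻ y in posOrthant d, ‖plWeight d α x r y‖ₑ *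
      ENNReal.ofReal (exp (-(-(4 * log r)⁻¹ * t ^ 2 / 2))) ≤
      ENNReal.ofReal (1 / (2 * √π) * (2 * √(8 * π)) / t) := by
  calc _ ≤ ∫⁻ r in Ioo (0 : ℝ) 1, ENNReal.ofReal (1 / (2 * √π)) *
        ENNReal.ofReal (((-log r) ^ ((3 : ℝ) / 2))⁻¹ / r *
          exp (-(-(4 * log r)⁻¹ * t ^ 2 / 2))) := by
        refine setLIntegral_mono' measurableSet_Ioo fun r hr => ?_
        have hlog : 0 < -log r := neg_pos.2 (log_neg hr.1 hr.2)
        have hr0 := hr.1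
        rw [lintegral_mul_const' _ _ ENNReal.ofReal_ne_top]
        refine (mul_le_mul_left (lintegral_plWeight_le hα hx hr) _).trans_eq ?_
        rw [← ENNReal.ofReal_mul (by positivity), ← ENNReal.ofReal_mul (by positivity), mul_assoc]
    _ ≤ _ := by
        rw [lintegral_const_mul' _ _ ENNReal.ofReal_ne_top, mul_div_assoc,
          ENNReal.ofReal_mul (by positivity)]
        exact mul_le_mul_right (lintegral_neg_log_rpow_mul_exp_le ht) _

theorem laguerre_poisson_kernel_iteratedDeriv_L1
    (d : ℕ) (hd : 1 ≤ d) (α : Fin d → ℝ) (hα : ∀ j, -(1 / 2 : ℝ) < α j)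
    (k : ℕ) (hk : 0 < k) :
    ∃ C > 0, ∀ t > (0 : ℝ), ∀ x ∈ posOrthant d,
      (∫ y in posOrthant d, |iteratedDeriv k (fun u => plKernel d α u x y) t|) ≤ C / t ^ k := by
  have hα' (j : Fin d) : -1 < α j := by linarith [hα j]
  obtain ⟨C, hC0, hC⟩ := exists_abs_eval_le_mul_exp (gaussPoly k)
  refine ⟨C * (1 / (2 * √π) * (2 * √(8 * π))), by positivity, fun t ht x hx => ?_⟩
  have ha0 : ∀ᵐ r ∂volume.restrict (Ioo (0 : ℝ) 1), 0 ≤ -(4 * log r)⁻¹ := by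
    filter_upwards [ae_restrict_mem measurableSet_Ioo] with r hr
    exact neg_nonneg.2 (inv_nonpos.2 (by linarith [log_neg hr.1 hr.2]))
  have hbound := lintegral_iteratedDeriv_le (ν := volume.restrict (posOrthant d)) (by fun_prop) ha0
    (measurable_plWeight d α x)
    (fun s hs => lintegral_lintegral_plWeight_mul_exp_le hα' hx hs) hC0 hC ht
  simp only [← plKernel_eq_integral_plWeight hα'] at hbound
  refine (ENNReal.ofReal_le_ofReal_iff (by positivity)).1 (le_trans ?_ hbound)
  rw [← Real.enorm_of_nonneg (integral_nonneg fun y => abs_nonneg _)]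
  refine (enorm_integral_le_lintegral_enorm _).trans_eq ?_
  simp only [Real.enorm_abs]
end
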